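/- arXiv:2404.01351 — 3 statements merged into one kernel-verified Lean document; each statement's English description precedes it below -/
import Mathlib

section
/- (Theorem 1, Disagreement Equality.) Suppose confidence–prediction calibration holds. Then for every N ≥ 1, the expected test error equals the expected prediction disagreement with dropouts: ∫_Θ Err(θ) dμ(θ) = ∫_{Θ^{N+1}} PDD_N(θ₀, θ₁, …, θ_N) d(μ^{⊗(N+1)})(θ₀, …, θ_N). -/
open MeasureTheory

/-!
By Fubini both sides can be computed test point by test point. At `ω` the random hypothesis errs
with probability `1 - p (Y ω) ω`, where `p k ω` is the probability that it predicts `k`, while two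
independent hypotheses disagree with probability `1 - ∑ k, p k ω ^ 2`. Calibration says that `p k`
is the conditional probability of `Y = k` given `p k`, so `∫ p k * 1{Y = k} = ∫ p k ^ 2`; summing
over `k` equates the two averages. Any two distinct coordinates of an i.i.d. sample of hypotheses
form an independent pair, so averaging over `N` dropout copies changes nothing.
-/

section ProductMeasure

variable {α β L : Type*} [MeasurableSpace α] [MeasurableSpace β]

theorem measurePreserving_eval_prodMk_eval {ι : Type*} [Fintype ι] {γ : ι → Type*}
    [∀ i, MeasurableSpace (γ i)] (μ : ∀ i, Measure (γ i)) [∀ i, IsProbabilityMeasure (μ i)]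
    {i j : ι} (hij : i ≠ j) :
    MeasurePreserving (fun x : ∀ i, γ i => (x i, x j)) (Measure.pi μ) ((μ i).prod (μ j)) := by
  refine ⟨by fun_prop, ?_⟩
  have hindep : ProbabilityTheory.IndepFun (Function.eval i) (Function.eval j) (Measure.pi μ) :=
    (ProbabilityTheory.iIndepFun_pi (X := fun _ => id) fun _ => aemeasurable_id).indepFun hij
  have hmap := hindep.map_prod_eq_prod_map_map
    (measurable_pi_apply i).aemeasurable (measurable_pi_apply j).aemeasurable
  rwa [(measurePreserving_eval μ i).map_eq, (measurePreserving_eval μ j).map_eq] at hmap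

theorem integral_measureReal_prodMk_comm (μ : Measure α) (ν : Measure β) [IsFiniteMeasure μ]
    [IsFiniteMeasure ν] {s : Set (α × β)} (hs : MeasurableSet s) :
    ∫ x, ν.real (Prod.mk x ⁻¹' s) ∂μ = ∫ y, μ.real ((fun x => (x, y)) ⁻¹' s) ∂ν := by
  simp only [measureReal_def]
  rw [integral_toReal (measurable_measure_prodMk_left hs).aemeasurable
      (ae_of_all _ fun _ => measure_lt_top _ _),
    integral_toReal (measurable_measure_prodMk_right hs).aemeasurable
      (ae_of_all _ fun _ => measure_lt_top _ _),
    ← Measure.prod_apply hs, ← Measure.prod_apply_symm hs]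

theorem integral_measureReal_prodMk_compl (μ : Measure α) (ν : Measure β) [IsFiniteMeasure μ]
    [IsFiniteMeasure ν] {s : Set (α × β)} (hs : MeasurableSet s) :
    ∫ x, ν.real (Prod.mk x ⁻¹' sᶜ) ∂μ =
      μ.real Set.univ * ν.real Set.univ - ∫ y, μ.real ((fun x => (x, y)) ⁻¹' s) ∂ν := by
  have hcompl (x : α) :
      ν.real (Prod.mk x ⁻¹' sᶜ) = ν.real Set.univ - ν.real (Prod.mk x ⁻¹' s) :=
    measureReal_compl (measurable_prodMk_left hs)
  simp_rw [hcompl]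
  rw [integral_sub (integrable_const _)
      (Measure.integrable_measure_prodMk_left hs (measure_ne_top _ _)),
    integral_measureReal_prodMk_comm μ ν hs, integral_const, smul_eq_mul]

variable [Countable L] [MeasurableSpace L] [MeasurableSingletonClass L]

theorem measureReal_prod_setOf_eq (μ : Measure α) (ν : Measure β) [IsFiniteMeasure μ]
    [IsFiniteMeasure ν] {f : α → L} {g : β → L} (hf : Measurable f) (hg : Measurable g) :
    (μ.prod ν).real {z | f z.1 = g z.2} = ∑' k, μ.real (f ⁻¹' {k}) * ν.real (g ⁻¹' {k}) := by
  have hunion : {z : α × β | f z.1 = g z.2} = ⋃ k, (f ⁻¹' {k}) ×ˢ (g ⁻¹' {k}) := by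
    ext z
    simp [eq_comm]
  have hdisj : Pairwise (Function.onFun Disjoint fun k => (f ⁻¹' {k}) ×ˢ (g ⁻¹' {k})) :=
    fun k l hkl => Set.Disjoint.set_prod_left
      (Disjoint.preimage f (Set.disjoint_singleton.2 hkl)) _ _
  rw [hunion, measureReal_def, measure_iUnion hdisj fun k =>
      (hf (measurableSet_singleton k)).prod (hg (measurableSet_singleton k)),
    ENNReal.tsum_toReal_eq fun k => measure_ne_top _ _]
  simp only [Measure.prod_prod, ENNReal.toReal_mul, measureReal_def]

end ProductMeasure

section Calibration

theorem integral_mul_eq_integral_mul_condExp {Ω : Type*} {m mΩ : MeasurableSpace Ω}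
    {ν : Measure Ω} (hm : m ≤ mΩ) [SigmaFinite (ν.trim hm)] {f g : Ω → ℝ}
    (hf : StronglyMeasurable[m] f) (hfg : Integrable (f * g) ν) (hg : Integrable g ν) :
    ∫ ω, f ω * g ω ∂ν = ∫ ω, f ω * (ν[g | m]) ω ∂ν :=
  (integral_condExp hm).symm.trans <|
    integral_congr_ae (condExp_mul_of_stronglyMeasurable_left hf hfg hg)

variable {Ω L : Type*} [MeasurableSpace Ω] [DecidableEq L]

/-- Confidence–prediction calibration of the scores `p k` for the random label `Y`: the conditional
probability of `Y = k` given the value of `p k` is `p k`. The conditioning is on each score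
separately, not on the whole family. -/
def IsCalibrated (ν : Measure Ω) (Y : Ω → L) (p : L → Ω → ℝ) : Prop :=
  ∀ k, ν[(fun ω => if Y ω = k then (1 : ℝ) else 0) |
    MeasurableSpace.comap (p k) Real.measurableSpace] =ᵐ[ν] p k

namespace IsCalibrated

variable {ν : Measure Ω} {Y : Ω → L} {p : L → Ω → ℝ}

theorem ae_abs_le_one (hcal : IsCalibrated ν Y p) (k : L) : ∀ᵐ ω ∂ν, |p k ω| ≤ 1 := by
  have hbound : ∀ᵐ ω ∂ν, |if Y ω = k then (1 : ℝ) else 0| ≤ 1 :=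
    ae_of_all _ fun ω => by split_ifs <;> simp
  filter_upwards [ae_bdd_abs_condExp_of_ae_bdd_abs hbound, hcal k] with ω hle heq
  rwa [heq] at hle

variable [IsFiniteMeasure ν] [MeasurableSpace L] [MeasurableSingletonClass L]

theorem setIntegral_eq_integral_sq (hcal : IsCalibrated ν Y p) (hY : Measurable Y) {k : L}
    (hp : Measurable (p k)) : ∫ ω in Y ⁻¹' {k}, p k ω ∂ν = ∫ ω, p k ω ^ 2 ∂ν := by
  have hk : MeasurableSet (Y ⁻¹' {k}) := hY (measurableSet_singleton k)
  let e : Ω → ℝ := fun ω => if Y ω = k then 1 else 0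
  have he : Integrable e ν := ((integrable_const (1 : ℝ)).indicator hk).congr <|
    ae_of_all _ fun ω => by simp [e, Set.indicator]
  have hpe : Integrable (p k * e) ν :=
    he.bdd_mul hp.aestronglyMeasurable (hcal.ae_abs_le_one k)
  calc ∫ ω in Y ⁻¹' {k}, p k ω ∂ν
      = ∫ ω, p k ω * e ω ∂ν := by
        rw [← integral_indicator hk]
        congr with ω
        simp [e, Set.indicator]
    _ = ∫ ω, p k ω * (ν[e | MeasurableSpace.comap (p k) Real.measurableSpace]) ω ∂ν :=
        integral_mul_eq_integral_mul_condExp hp.comap_le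
          (comap_measurable (p k)).stronglyMeasurable hpe he
    _ = ∫ ω, p k ω ^ 2 ∂ν := by
        refine integral_congr_ae ?_
        filter_upwards [hcal k] with ω hω
        rw [hω, sq]

variable [Countable L]

theorem integrable_apply_label (hcal : IsCalibrated ν Y p) (hY : Measurable Y)
    (hp : ∀ k, Measurable (p k)) : Integrable (fun ω => p (Y ω) ω) ν := by
  have hmeas : Measurable fun ω => p (Y ω) ω :=
    (measurable_from_prod_countable_right hp : Measurable (Function.uncurry p)).comp
      (hY.prodMk measurable_id)
  refine .of_bound hmeas.aestronglyMeasurable 1 ?_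
  filter_upwards [ae_all_iff.2 hcal.ae_abs_le_one] with ω hω using hω (Y ω)

theorem hasSum_integral_sq (hcal : IsCalibrated ν Y p) (hY : Measurable Y)
    (hp : ∀ k, Measurable (p k)) :
    HasSum (fun k => ∫ ω, p k ω ^ 2 ∂ν) (∫ ω, p (Y ω) ω ∂ν) := by
  have hfiber (k : L) : ∫ ω in Y ⁻¹' {k}, p (Y ω) ω ∂ν = ∫ ω, p k ω ^ 2 ∂ν := by
    rw [← hcal.setIntegral_eq_integral_sq hY (hp k)]
    exact setIntegral_congr_fun (hY (measurableSet_singleton k)) fun ω hω => by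
      rw [Set.mem_singleton_iff.1 hω]
  have hcover : ⋃ k, Y ⁻¹' {k} = Set.univ := by
    rw [← Set.preimage_iUnion, Set.iUnion_of_singleton, Set.preimage_univ]
  have hsum := hasSum_integral_iUnion (fun k => hY (measurableSet_singleton k))
    (fun k l hkl => Disjoint.preimage Y (Set.disjoint_singleton.2 hkl))
    (hcal.integrable_apply_label hY hp).integrableOn
  simpa only [hfiber, hcover, setIntegral_univ] using hsum

theorem integral_apply_label (hcal : IsCalibrated ν Y p) (hY : Measurable Y)
    (hp : ∀ k, Measurable (p k)) :
    ∫ ω, p (Y ω) ω ∂ν = ∫ ω, ∑' k, p k ω ^ 2 ∂ν := by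
  have hsum := hcal.hasSum_integral_sq hY hp
  have hint (k : L) : Integrable (fun ω => p k ω ^ 2) ν := by
    refine .of_bound ((hp k).pow_const 2).aestronglyMeasurable 1 ?_
    filter_upwards [hcal.ae_abs_le_one k] with ω hω
    simpa using hω
  have hnorm : Summable fun k => ∫ ω, ‖p k ω ^ 2‖ ∂ν := by
    simpa only [Real.norm_of_nonneg (sq_nonneg _)] using hsum.summable
  rw [← hsum.tsum_eq, integral_tsum_of_summable_integral_norm hint hnorm]

end IsCalibrated

end Calibration

section Disagreement

variable {Θ Ω L : Type*}

/-- The expectation function `h̃`: the probability that a random hypothesis predicts the label `k`.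
Here `g θ ω` is the prediction of the hypothesis `θ` at the test point `ω`, so `h θ (X ω)` in the
paper's notation. -/
noncomputable def expectedPrediction [MeasurableSpace Θ] (μ : Measure Θ) (g : Θ → Ω → L)
    (k : L) (ω : Ω) : ℝ :=
  μ.real {θ | g θ ω = k}

variable [MeasurableSpace Ω]

/-- The test error of the hypothesis `θ`, where `Y ω` is the true label of the test point `ω`. -/
noncomputable def testError (ν : Measure Ω) (g : Θ → Ω → L) (Y : Ω → L) (θ : Θ) : ℝ :=
  ν.real {ω | g θ ω ≠ Y ω}

/-- The prediction disagreement of two hypotheses: the probability that they predict different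
labels at a test point. -/
noncomputable def pairDisagreement (ν : Measure Ω) (g : Θ → Ω → L) (z : Θ × Θ) : ℝ :=
  ν.real {ω | g z.1 ω ≠ g z.2 ω}

/-- The prediction disagreement with dropouts `PDD_N`: the hypothesis `θs 0` is the full model and
`θs 1, …, θs N` are its dropout copies. -/
noncomputable def dropoutDisagreement [DecidableEq L] (ν : Measure Ω) (g : Θ → Ω → L) (N : ℕ)
    (θs : Fin (N + 1) → Θ) : ℝ :=
  ∫ ω, (1 / (N : ℝ)) * ∑ i : Fin N, (if g (θs 0) ω = g (θs i.succ) ω then (0 : ℝ) else 1) ∂ν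

variable [MeasurableSpace L] [MeasurableSingletonClass L] {g : Θ → Ω → L} {Y : Ω → L}

theorem measurable_expectedPrediction [MeasurableSpace Θ] (μ : Measure Θ) [SFinite μ]
    (hg : Measurable (Function.uncurry g)) (k : L) : Measurable (expectedPrediction μ g k) :=
  (measurable_measure_prodMk_right (hg (measurableSet_singleton k))).ennreal_toReal

variable [Countable L]

theorem dropoutDisagreement_eq_average [DecidableEq L] (ν : Measure Ω) [IsFiniteMeasure ν]
    (hg : ∀ θ, Measurable (g θ)) (N : ℕ) (θs : Fin (N + 1) → Θ) :
    dropoutDisagreement ν g N θs =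
      1 / N * ∑ i : Fin N, pairDisagreement ν g (θs 0, θs i.succ) := by
  have hne (i : Fin N) : MeasurableSet {ω | g (θs 0) ω ≠ g (θs i.succ) ω} :=
    (measurableSet_eq_fun (hg _) (hg _)).compl
  have hint (i : Fin N) :
      Integrable ({ω | g (θs 0) ω ≠ g (θs i.succ) ω}.indicator (1 : Ω → ℝ)) ν :=
    (integrable_const (1 : ℝ)).indicator (hne i)
  have hindicator (i : Fin N) (ω : Ω) :
      (if g (θs 0) ω = g (θs i.succ) ω then (0 : ℝ) else 1) =
        {ω | g (θs 0) ω ≠ g (θs i.succ) ω}.indicator 1 ω := by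
    simp [Set.indicator_apply]
  simp_rw [dropoutDisagreement, hindicator]
  rw [integral_const_mul, integral_finsetSum _ fun i _ => hint i]
  simp_rw [integral_indicator_one (hne _)]
  rfl

variable [MeasurableSpace Θ]

theorem measurableSet_setOf_agree (hg : Measurable (Function.uncurry g)) :
    MeasurableSet {z : (Θ × Θ) × Ω | g z.1.1 z.2 = g z.1.2 z.2} :=
  measurableSet_eq_fun (hg.comp (measurable_fst.fst.prodMk measurable_snd))
    (hg.comp (measurable_fst.snd.prodMk measurable_snd))

theorem integrable_pairDisagreement (μ : Measure Θ) [IsFiniteMeasure μ] (ν : Measure Ω)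
    [IsFiniteMeasure ν] (hg : Measurable (Function.uncurry g)) :
    Integrable (pairDisagreement ν g) (μ.prod μ) :=
  Measure.integrable_measure_prodMk_left (measurableSet_setOf_agree hg).compl (measure_ne_top _ _)

theorem integral_testError (μ : Measure Θ) [IsProbabilityMeasure μ] (ν : Measure Ω)
    [IsFiniteMeasure ν] (hg : Measurable (Function.uncurry g)) (hY : Measurable Y) :
    ∫ θ, testError ν g Y θ ∂μ = ν.real Set.univ - ∫ ω, expectedPrediction μ g (Y ω) ω ∂ν := by
  have hcorrect : MeasurableSet {z : Θ × Ω | g z.1 z.2 = Y z.2} :=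
    measurableSet_eq_fun hg (hY.comp measurable_snd)
  have hfubini := integral_measureReal_prodMk_compl μ ν hcorrect
  rwa [probReal_univ, one_mul] at hfubini

theorem integral_pairDisagreement (μ : Measure Θ) [IsProbabilityMeasure μ] (ν : Measure Ω)
    [IsFiniteMeasure ν] (hg : Measurable (Function.uncurry g)) :
    ∫ z, pairDisagreement ν g z ∂(μ.prod μ) =
      ν.real Set.univ - ∫ ω, ∑' k, expectedPrediction μ g k ω ^ 2 ∂ν := by
  have hagree (ω : Ω) : (μ.prod μ).real {z | g z.1 ω = g z.2 ω} =
      ∑' k, expectedPrediction μ g k ω ^ 2 := by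
    simp_rw [sq]
    exact measureReal_prod_setOf_eq μ μ hg.of_uncurry_right hg.of_uncurry_right
  have hfubini := integral_measureReal_prodMk_compl (μ.prod μ) ν (measurableSet_setOf_agree hg)
  rw [probReal_univ, one_mul] at hfubini
  exact hfubini.trans (congrArg _ (integral_congr_ae (ae_of_all _ hagree)))

variable [DecidableEq L]

theorem integral_testError_eq_integral_pairDisagreement (μ : Measure Θ)
    [IsProbabilityMeasure μ] (ν : Measure Ω) [IsFiniteMeasure ν]
    (hg : Measurable (Function.uncurry g)) (hY : Measurable Y)
    (hcal : IsCalibrated ν Y (expectedPrediction μ g)) :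
    ∫ θ, testError ν g Y θ ∂μ = ∫ z, pairDisagreement ν g z ∂(μ.prod μ) := by
  rw [integral_testError μ ν hg hY, integral_pairDisagreement μ ν hg,
    hcal.integral_apply_label hY (measurable_expectedPrediction μ hg)]

theorem integral_dropoutDisagreement (μ : Measure Θ) [IsProbabilityMeasure μ] (ν : Measure Ω)
    [IsFiniteMeasure ν] (hg : Measurable (Function.uncurry g)) {N : ℕ} (hN : N ≠ 0) :
    ∫ θs, dropoutDisagreement ν g N θs ∂(Measure.pi fun _ : Fin (N + 1) => μ) =
      ∫ z, pairDisagreement ν g z ∂(μ.prod μ) := by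
  have hpair (i : Fin N) := measurePreserving_eval_prodMk_eval (fun _ : Fin (N + 1) => μ)
    (Fin.succ_ne_zero i).symm
  have hint (i : Fin N) : Integrable (fun θs => pairDisagreement ν g (θs 0, θs i.succ))
      (Measure.pi fun _ : Fin (N + 1) => μ) :=
    (hpair i).integrable_comp_of_integrable (integrable_pairDisagreement μ ν hg)
  have hcopy (i : Fin N) :
      ∫ θs, pairDisagreement ν g (θs 0, θs i.succ) ∂(Measure.pi fun _ : Fin (N + 1) => μ) =
        ∫ z, pairDisagreement ν g z ∂(μ.prod μ) := by
    rw [← (hpair i).map_eq, integral_map (hpair i).aemeasurable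
      ((hpair i).map_eq.symm ▸ (integrable_pairDisagreement μ ν hg).aestronglyMeasurable)]
  simp_rw [dropoutDisagreement_eq_average (g := g) ν fun _ => hg.of_uncurry_left]
  rw [integral_const_mul, integral_finsetSum _ fun i _ => hint i]
  simp only [hcopy, Finset.sum_const, Finset.card_univ, Fintype.card_fin, nsmul_eq_mul]
  field_simp

end Disagreement

theorem disagreement_equality_general {Θ Ω L : Type*} [MeasurableSpace Θ] [MeasurableSpace Ω]
    [Countable L] [DecidableEq L] [MeasurableSpace L] [MeasurableSingletonClass L]
    (μ : Measure Θ) (ν : Measure Ω) [IsProbabilityMeasure μ] [IsFiniteMeasure ν]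
    {g : Θ → Ω → L} (hg : Measurable (Function.uncurry g)) {Y : Ω → L} (hY : Measurable Y)
    (hcal : IsCalibrated ν Y (expectedPrediction μ g)) {N : ℕ} (hN : N ≠ 0) :
    ∫ θ, testError ν g Y θ ∂μ =
      ∫ θs, dropoutDisagreement ν g N θs ∂(Measure.pi fun _ : Fin (N + 1) => μ) := by
  rw [integral_dropoutDisagreement μ ν hg hN,
    integral_testError_eq_integral_pairDisagreement μ ν hg hY hcal]

/-- Theorem 1 (Disagreement Equality): under confidence–prediction calibration,
the expected test error equals the expected prediction disagreement with dropouts. -/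
theorem disagreement_equality
    {Θ Ω 𝒳 : Type*} [MeasurableSpace Θ] [MeasurableSpace Ω] [MeasurableSpace 𝒳]
    (μ : Measure Θ) (ν : Measure Ω)
    [IsProbabilityMeasure μ] [IsProbabilityMeasure ν]
    (K : ℕ) (hK : 1 ≤ K)
    (h : Θ × 𝒳 → Fin K) (hmeas : Measurable h)
    (X : Ω → 𝒳) (hX : Measurable X)
    (Y : Ω → Fin K) (hY : Measurable Y)
    (htilde : Fin K → 𝒳 → ℝ)
    (htilde_def : ∀ k x, htilde k x = (μ {θ | h (θ, x) = k}).toReal)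
    (Err : Θ → ℝ)
    (Err_def : ∀ θ, Err θ = (ν {ω | h (θ, X ω) ≠ Y ω}).toReal)
    (calib : ∀ k : Fin K,
      ν[(fun ω => if Y ω = k then (1 : ℝ) else 0) |
          MeasurableSpace.comap (fun ω => htilde k (X ω)) Real.measurableSpace]
        =ᵐ[ν] fun ω => htilde k (X ω))
    (N : ℕ) (hN : 1 ≤ N)
    (PDD : (Fin (N + 1) → Θ) → ℝ)
    (PDD_def : ∀ θs : Fin (N + 1) → Θ,
      PDD θs = ∫ ω, (1 / (N : ℝ)) *
        ∑ i : Fin N, (if h (θs 0, X ω) = h (θs i.succ, X ω) then (0 : ℝ) else 1) ∂ν) :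
    ∫ θ, Err θ ∂μ = ∫ θs, PDD θs ∂(Measure.pi fun _ : Fin (N + 1) => μ) := by
  obtain rfl := funext₂ htilde_def
  rw [funext Err_def, funext PDD_def]
  exact disagreement_equality_general μ ν (g := fun θ ω => h (θ, X ω))
    (hmeas.comp (measurable_fst.prodMk (hX.comp measurable_snd))) hY calib
    (Nat.one_le_iff_ne_zero.1 hN)
end

section
/- (Calibration expansion step in the proof of Theorem 1.) Suppose confidence–prediction calibration holds. Then ∫_Ω (1 − h̃_{Y(ω)}(X(ω))) dν(ω) = Σ_{k ∈ Fin K} ∫_Ω h̃_k(X(ω)) (1 − h̃_k(X(ω))) dν(ω). -/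
open MeasureTheory

/-
On `{Y = k}` the loss is `1 - p k`, a function of the confidence `p k` itself. So integrating it
over `{Y = k}` is integrating it against the indicator of `{Y = k}`, which may be replaced by its
conditional expectation given `p k`; by calibration, this is `p k`. Now sum over `k`; the
loss is integrable because a calibrated confidence takes values in `[0, 1]` almost everywhere.
-/

section Calibration

variable {Ω : Type*} {m₀ : MeasurableSpace Ω} {ν : Measure Ω}

theorem measurable_toReal_measure_fiber {Θ 𝒳 κ : Type*} [MeasurableSpace Θ] [MeasurableSpace 𝒳]
    [MeasurableSpace κ] [MeasurableSingletonClass κ] (μ : Measure Θ) [SFinite μ]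
    {h : Θ × 𝒳 → κ} (hmeas : Measurable h) (k : κ) :
    Measurable fun x ↦ (μ {θ | h (θ, x) = k}).toReal :=
  (measurable_measure_prodMk_right (hmeas (measurableSet_singleton k))).ennreal_toReal

theorem integral_mul_condExp_of_stronglyMeasurable {m : MeasurableSpace Ω} (hm : m ≤ m₀)
    [SigmaFinite (ν.trim hm)] {f g : Ω → ℝ} (hf : StronglyMeasurable[m] f)
    (hfg : Integrable (f * g) ν) (hg : Integrable g ν) :
    ∫ ω, f ω * (ν[g | m]) ω ∂ν = ∫ ω, f ω * g ω ∂ν :=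
  calc ∫ ω, f ω * (ν[g | m]) ω ∂ν
      = ∫ ω, (ν[f * g | m]) ω ∂ν :=
        integral_congr_ae (condExp_mul_of_stronglyMeasurable_left hf hfg hg).symm
    _ = ∫ ω, f ω * g ω ∂ν := integral_condExp hm

/-- The confidence `p` is calibrated for the event `s`: it is a version of the conditional
probability of `s` given the value of `p`. Measurability of `p` is part of the notion, because the
conditional expectation is `0` by convention when `σ(p)` is not contained in the ambient
σ-algebra. -/
structure IsCalibrated_s3 (ν : Measure Ω) (p : Ω → ℝ) (s : Set Ω) : Prop where
  measurable : Measurable p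
  condExp_indicator_ae_eq :
    ν[s.indicator (1 : Ω → ℝ) | MeasurableSpace.comap p inferInstance] =ᵐ[ν] p

namespace IsCalibrated_s3

variable {p : Ω → ℝ} {s : Set Ω}

theorem of_condExp_ite {P : Ω → Prop} [DecidablePred P] (hp : Measurable p)
    (h : ν[fun ω ↦ if P ω then (1 : ℝ) else 0 | MeasurableSpace.comap p inferInstance] =ᵐ[ν] p) :
    IsCalibrated_s3 ν p {ω | P ω} := by
  have indicator_eq_ite : {ω | P ω}.indicator 1 = fun ω ↦ if P ω then (1 : ℝ) else 0 := by
    funext ω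
    by_cases hω : P ω <;> simp [hω]
  exact ⟨hp, indicator_eq_ite ▸ h⟩

variable [IsFiniteMeasure ν]

theorem ae_mem_Icc (hp : IsCalibrated_s3 ν p s) (hs : MeasurableSet s) :
    ∀ᵐ ω ∂ν, p ω ∈ Set.Icc (0 : ℝ) 1 := by
  have indicator_nonneg : 0 ≤ᵐ[ν] s.indicator (1 : Ω → ℝ) :=
    .of_forall <| Set.indicator_nonneg fun _ _ ↦ zero_le_one
  have indicator_le_one : s.indicator (1 : Ω → ℝ) ≤ᵐ[ν] fun _ ↦ 1 :=
    .of_forall <| Set.indicator_le_self' fun _ _ ↦ zero_le_one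
  have condExp_le_one := condExp_mono (m := MeasurableSpace.comap p inferInstance)
    ((integrable_const 1).indicator hs) (integrable_const 1) indicator_le_one
  rw [condExp_const hp.measurable.comap_le] at condExp_le_one
  filter_upwards [condExp_nonneg indicator_nonneg, condExp_le_one, hp.condExp_indicator_ae_eq]
    with ω h_nonneg h_le_one h_eq
  exact h_eq ▸ ⟨h_nonneg, h_le_one⟩

theorem setIntegral_comp (hp : IsCalibrated_s3 ν p s) (hs : MeasurableSet s) {φ : ℝ → ℝ}
    (hφ : Measurable φ) (hint : IntegrableOn (φ ∘ p) s ν) :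
    ∫ ω in s, φ (p ω) ∂ν = ∫ ω, p ω * φ (p ω) ∂ν := by
  have mul_indicator : (φ ∘ p) * s.indicator 1 = s.indicator (φ ∘ p) := by
    funext ω
    by_cases hω : ω ∈ s <;> simp [hω]
  calc ∫ ω in s, φ (p ω) ∂ν
      = ∫ ω, (φ ∘ p) ω * s.indicator 1 ω ∂ν :=
        (integral_indicator hs).symm.trans
          (congrArg (fun f ↦ ∫ ω, f ω ∂ν) mul_indicator.symm)
    _ = ∫ ω, (φ ∘ p) ω * (ν[s.indicator 1 | MeasurableSpace.comap p inferInstance]) ω ∂ν :=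
        (integral_mul_condExp_of_stronglyMeasurable hp.measurable.comap_le
          (hφ.comp (comap_measurable p)).stronglyMeasurable
          (mul_indicator ▸ hint.integrable_indicator hs)
          ((integrable_const 1).indicator hs)).symm
    _ = ∫ ω, p ω * φ (p ω) ∂ν := by
        refine integral_congr_ae ?_
        filter_upwards [hp.condExp_indicator_ae_eq] with ω h_eq
        rw [h_eq, mul_comm, Function.comp_apply]

end IsCalibrated_s3

variable [IsFiniteMeasure ν] {ι : Type*} [Countable ι] [MeasurableSpace ι]
  [MeasurableSingletonClass ι] {Y : Ω → ι} {p : ι → Ω → ℝ}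

theorem integrable_one_sub_of_isCalibrated (hY : Measurable Y)
    (hp : ∀ k, IsCalibrated_s3 ν (p k) (Y ⁻¹' {k})) :
    Integrable (fun ω ↦ 1 - p (Y ω) ω) ν := by
  have measurable_eval : Measurable fun ω ↦ p (Y ω) ω :=
    (measurable_from_prod_countable_right (f := fun z : ι × Ω ↦ p z.1 z.2)
      fun k ↦ (hp k).measurable).comp (hY.prodMk measurable_id)
  refine .of_bound (measurable_eval.const_sub 1).aestronglyMeasurable 1 ?_
  filter_upwards [ae_all_iff.2 fun k ↦ (hp k).ae_mem_Icc (hY (measurableSet_singleton k))]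
    with ω h_mem
  obtain ⟨h_nonneg, h_le_one⟩ := h_mem (Y ω)
  rw [Real.norm_eq_abs, abs_le]
  constructor <;> linarith

theorem calibration_expansion_general (hY : Measurable Y)
    (hp : ∀ k, IsCalibrated_s3 ν (p k) (Y ⁻¹' {k})) :
    HasSum (fun k ↦ ∫ ω, p k ω * (1 - p k ω) ∂ν) (∫ ω, (1 - p (Y ω) ω) ∂ν) := by
  have measurableSet_fiber (k : ι) : MeasurableSet (Y ⁻¹' {k}) := hY (measurableSet_singleton k)
  have iUnion_fiber : ⋃ k, Y ⁻¹' {k} = Set.univ := by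
    rw [← Set.preimage_iUnion, Set.iUnion_of_singleton, Set.preimage_univ]
  have integrable_loss : Integrable (fun ω ↦ 1 - p (Y ω) ω) ν :=
    integrable_one_sub_of_isCalibrated hY hp
  have loss_eqOn_fiber (k : ι) :
      Set.EqOn (fun ω ↦ 1 - p (Y ω) ω) (fun ω ↦ 1 - p k ω) (Y ⁻¹' {k}) :=
    fun ω (hω : Y ω = k) ↦ by simp only [hω]
  have setIntegral_fiber (k : ι) :
      ∫ ω in Y ⁻¹' {k}, (1 - p (Y ω) ω) ∂ν = ∫ ω, p k ω * (1 - p k ω) ∂ν := by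
    rw [setIntegral_congr_fun (measurableSet_fiber k) (loss_eqOn_fiber k)]
    exact (hp k).setIntegral_comp (measurableSet_fiber k) (measurable_id.const_sub 1)
      (integrable_loss.integrableOn.congr_fun (loss_eqOn_fiber k) (measurableSet_fiber k))
  simpa only [setIntegral_fiber, iUnion_fiber, setIntegral_univ] using
    hasSum_integral_iUnion measurableSet_fiber (pairwise_disjoint_fiber Y)
      integrable_loss.integrableOn

end Calibration

/-- Calibration expansion step in the proof of Theorem 1. -/
theorem calibration_expansion
    {Θ Ω 𝒳 : Type*} [MeasurableSpace Θ] [MeasurableSpace Ω] [MeasurableSpace 𝒳]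
    (μ : Measure Θ) (ν : Measure Ω)
    [IsProbabilityMeasure μ] [IsProbabilityMeasure ν]
    (K : ℕ) (hK : 1 ≤ K)
    (h : Θ × 𝒳 → Fin K) (hmeas : Measurable h)
    (X : Ω → 𝒳) (hX : Measurable X)
    (Y : Ω → Fin K) (hY : Measurable Y)
    (htilde : Fin K → 𝒳 → ℝ)
    (htilde_def : ∀ k x, htilde k x = (μ {θ | h (θ, x) = k}).toReal)
    (calib : ∀ k : Fin K,
      ν[(fun ω => if Y ω = k then (1 : ℝ) else 0) |
          MeasurableSpace.comap (fun ω => htilde k (X ω)) Real.measurableSpace]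
        =ᵐ[ν] fun ω => htilde k (X ω)) :
    ∫ ω, (1 - htilde (Y ω) (X ω)) ∂ν =
      ∑ k : Fin K, ∫ ω, htilde k (X ω) * (1 - htilde k (X ω)) ∂ν := by
  have measurable_htilde (k : Fin K) : Measurable (htilde k) :=
    funext (htilde_def k) ▸ measurable_toReal_measure_fiber μ hmeas k
  have isCalibrated (k : Fin K) : IsCalibrated_s3 ν (fun ω ↦ htilde k (X ω)) (Y ⁻¹' {k}) :=
    .of_condExp_ite ((measurable_htilde k).comp hX) (calib k)
  exact (calibration_expansion_general hY isCalibrated).unique (hasSum_fintype _)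
end

section
/- (Robust-calibration error decomposition step in the proof of Theorem 2.) Suppose robust confidence–prediction calibration holds with over-confident class k' and constants b ≥ 1, 0 ≤ a ≤ 1. Then ∫_Ω (1 − h̃_{Y(ω)}(X(ω))) dν(ω) = a · T_{k'} + b · Σ_{k ≠ k'} T_k, where T_k = ∫_Ω h̃_k(X(ω)) (1 − h̃_k(X(ω))) dν(ω). -/
open MeasureTheory

/-!
Write `pₖ = h̃ₖ ∘ X` and let `cₖ` be the constant with `𝔼[1{Y = k} | σ(pₖ)] = cₖ pₖ`. The error
splits over the true class as `𝔼[1 - p_Y] = ∑ₖ 𝔼[1{Y = k} (1 - pₖ)]`. As `1 - pₖ` is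
`σ(pₖ)`-measurable, it can be pulled out of the conditional expectation given `σ(pₖ)`, so the
`k`-th term equals `cₖ 𝔼[pₖ (1 - pₖ)]`.
-/

lemma integral_mul_eq_const_mul_integral_mul_of_condExp_ae_eq
    {Ω : Type*} {m m₀ : MeasurableSpace Ω} {ν : Measure Ω} (hm : m ≤ m₀)
    [SigmaFinite (ν.trim hm)] {f g φ : Ω → ℝ} {c : ℝ} (hf : Integrable f ν)
    (hφ : StronglyMeasurable[m] φ) (hfφ : Integrable (fun ω => f ω * φ ω) ν)
    (hfg : ν[f | m] =ᵐ[ν] fun ω => c * g ω) :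
    ∫ ω, f ω * φ ω ∂ν = c * ∫ ω, g ω * φ ω ∂ν := by
  have pull_out : ν[fun ω => f ω * φ ω | m] =ᵐ[ν] fun ω => (ν[f | m]) ω * φ ω :=
    condExp_mul_of_stronglyMeasurable_right hφ hfφ hf
  calc ∫ ω, f ω * φ ω ∂ν
      = ∫ ω, (ν[fun ω => f ω * φ ω | m]) ω ∂ν := (integral_condExp hm).symm
    _ = ∫ ω, c * (g ω * φ ω) ∂ν := by
        refine integral_congr_ae ?_
        filter_upwards [pull_out, hfg] with ω hω hfgω
        rw [hω, hfgω, mul_assoc]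
    _ = c * ∫ ω, g ω * φ ω ∂ν := integral_const_mul c _

section FiniteClasses

variable {Ω ι : Type*} [MeasurableSpace Ω] [DecidableEq ι] [MeasurableSpace ι]
  [MeasurableSingletonClass ι] {ν : Measure Ω} {Y : Ω → ι}

lemma integrable_ite_eq_mul (hY : Measurable Y) (k : ι) {F : Ω → ℝ} (hF : Integrable F ν) :
    Integrable (fun ω => (if Y ω = k then 1 else 0) * F ω) ν := by
  refine (hF.indicator (hY (measurableSet_singleton k))).congr (.of_forall fun ω => ?_)
  simp only [Set.indicator, Set.mem_preimage, Set.mem_singleton_iff, ite_mul, one_mul, zero_mul]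

lemma integral_apply_eq_sum_integral_ite_eq_mul [Fintype ι] (hY : Measurable Y) {F : ι → Ω → ℝ}
    (hF : ∀ k, Integrable (F k) ν) :
    ∫ ω, F (Y ω) ω ∂ν = ∑ k, ∫ ω, (if Y ω = k then 1 else 0) * F k ω ∂ν := by
  rw [← integral_finsetSum _ fun k _ => integrable_ite_eq_mul hY k (hF k)]
  simp only [ite_mul, one_mul, zero_mul, Finset.sum_ite_eq, Finset.mem_univ, if_true]

theorem robust_calibration_error_decomposition_general [Fintype ι] [IsFiniteMeasure ν]
    (hY : Measurable Y) {p : ι → Ω → ℝ} (hp_meas : ∀ k, Measurable (p k))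
    (hp_int : ∀ k, Integrable (p k) ν) {c : ι → ℝ}
    (calib : ∀ k,
      ν[(fun ω => if Y ω = k then (1 : ℝ) else 0) |
          MeasurableSpace.comap (p k) Real.measurableSpace]
        =ᵐ[ν] fun ω => c k * p k ω) :
    ∫ ω, (1 - p (Y ω) ω) ∂ν = ∑ k, c k * ∫ ω, p k ω * (1 - p k ω) ∂ν := by
  have one_sub_int : ∀ k, Integrable (fun ω => 1 - p k ω) ν :=
    fun k => (integrable_const 1).sub (hp_int k)
  rw [integral_apply_eq_sum_integral_ite_eq_mul hY one_sub_int]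
  refine Finset.sum_congr rfl fun k _ => ?_
  have indicator_int : Integrable (fun ω => if Y ω = k then (1 : ℝ) else 0) ν := by
    simpa only [mul_one] using integrable_ite_eq_mul hY k (integrable_const (1 : ℝ))
  exact integral_mul_eq_const_mul_integral_mul_of_condExp_ae_eq (hp_meas k).comap_le
    indicator_int ((comap_measurable (p k)).const_sub 1).stronglyMeasurable
    (integrable_ite_eq_mul hY k (one_sub_int k)) (calib k)

end FiniteClasses

section ExpectationFunction

variable {Θ 𝒳 ι : Type*} [MeasurableSpace Θ]

/-- The expectation function `h̃ₖ(x) = μ {θ | h (θ, x) = k}` of a hypothesis `θ` drawn from `μ`: the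
confidence with which class `k` is predicted at `x`. -/
noncomputable def expectationFunction (μ : Measure Θ) (h : Θ × 𝒳 → ι) (k : ι) (x : 𝒳) : ℝ :=
  μ.real {θ | h (θ, x) = k}

variable [MeasurableSpace 𝒳] [MeasurableSpace ι] [MeasurableSingletonClass ι] {h : Θ × 𝒳 → ι}

lemma measurable_expectationFunction (μ : Measure Θ) [SFinite μ] (hh : Measurable h) (k : ι) :
    Measurable (expectationFunction μ h k) :=
  (measurable_measure_prodMk_right (hh (measurableSet_singleton k))).ennreal_toReal

lemma integrable_expectationFunction_comp {Ω : Type*} [MeasurableSpace Ω] {ν : Measure Ω}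
    [IsFiniteMeasure ν] (μ : Measure Θ) [IsFiniteMeasure μ] (hh : Measurable h) {X : Ω → 𝒳}
    (hX : Measurable X) (k : ι) :
    Integrable (fun ω => expectationFunction μ h k (X ω)) ν :=
  .of_mem_Icc 0 (μ.real Set.univ) ((measurable_expectationFunction μ hh k).comp hX).aemeasurable
    (.of_forall fun _ => ⟨measureReal_nonneg, measureReal_mono (Set.subset_univ _)⟩)

end ExpectationFunction

/-- Robust-calibration error decomposition step in the proof of Theorem 2. -/
theorem robust_calibration_error_decomposition
    {Θ Ω 𝒳 : Type*} [MeasurableSpace Θ] [MeasurableSpace Ω] [MeasurableSpace 𝒳]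
    (μ : Measure Θ) (ν : Measure Ω)
    [IsProbabilityMeasure μ] [IsProbabilityMeasure ν]
    (K : ℕ) (hK : 1 ≤ K)
    (h : Θ × 𝒳 → Fin K) (hmeas : Measurable h)
    (X : Ω → 𝒳) (hX : Measurable X)
    (Y : Ω → Fin K) (hY : Measurable Y)
    (htilde : Fin K → 𝒳 → ℝ)
    (htilde_def : ∀ k x, htilde k x = (μ {θ | h (θ, x) = k}).toReal)
    (k' : Fin K) (a b : ℝ) (hb : 1 ≤ b) (ha0 : 0 ≤ a) (ha1 : a ≤ 1)
    (calib_over :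
      ν[(fun ω => if Y ω = k' then (1 : ℝ) else 0) |
          MeasurableSpace.comap (fun ω => htilde k' (X ω)) Real.measurableSpace]
        =ᵐ[ν] fun ω => a * htilde k' (X ω))
    (calib_rest : ∀ k : Fin K, k ≠ k' →
      ν[(fun ω => if Y ω = k then (1 : ℝ) else 0) |
          MeasurableSpace.comap (fun ω => htilde k (X ω)) Real.measurableSpace]
        =ᵐ[ν] fun ω => b * htilde k (X ω))
    (T : Fin K → ℝ)
    (T_def : ∀ k, T k = ∫ ω, htilde k (X ω) * (1 - htilde k (X ω)) ∂ν) :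
    ∫ ω, (1 - htilde (Y ω) (X ω)) ∂ν =
      a * T k' + b * ∑ k ∈ Finset.univ.erase k', T k := by
  obtain rfl : htilde = expectationFunction μ h := funext₂ htilde_def
  have calib : ∀ k,
      ν[(fun ω => if Y ω = k then (1 : ℝ) else 0) |
          MeasurableSpace.comap (fun ω => expectationFunction μ h k (X ω)) Real.measurableSpace]
        =ᵐ[ν] fun ω => (if k = k' then a else b) * expectationFunction μ h k (X ω) := fun k => by
    split_ifs with hk
    · exact hk ▸ calib_over
    · exact calib_rest k hk
  calc ∫ ω, (1 - expectationFunction μ h (Y ω) (X ω)) ∂ν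
      = ∑ k, (if k = k' then a else b) * T k := by
        simpa only [T_def] using
          robust_calibration_error_decomposition_general hY
            (p := fun k ω => expectationFunction μ h k (X ω))
            (fun k => (measurable_expectationFunction μ hmeas k).comp hX)
            (integrable_expectationFunction_comp μ hmeas hX) calib
    _ = a * T k' + b * ∑ k ∈ Finset.univ.erase k', T k := by
        rw [← Finset.add_sum_erase _ _ (Finset.mem_univ k'), if_pos rfl, Finset.mul_sum]
        exact congrArg _ <| Finset.sum_congr rfl fun k hk => by
          rw [if_neg (Finset.ne_of_mem_erase hk)]
end
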